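/- arXiv:2308.05017 — 9 statements merged into one kernel-verified Lean document; each statement's English description precedes it below -/
import Mathlib

section
/- For every feature map f : X → ℝ^k, the matrix-factorization loss satisfies L_mf(f) = L_nscl(f) + C, where C = Σ_{x,x'∈X} w(x,x')² / (w(x)·w(x')) is a constant not depending on f. In particular, minimizing L_mf over f is equivalent to minimizing the NCD Spectral Contrastive Loss L_nscl over f. -/
/-- Move a sum past two inner sums. -/
theorem aux_swap {S X : Type*} [Fintype S] [Fintype X] (F : S → X → X → ℝ) :
    ∑ s, ∑ x, ∑ y, F s x y = ∑ x, ∑ y, ∑ s, F s x y := by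
  rw [Finset.sum_comm]
  exact Finset.sum_congr rfl fun x _ => Finset.sum_comm

/-- **NCD Spectral Contrastive Loss decomposition.**
For every feature map `f : X → ℝ^k`, the matrix-factorization loss satisfies
`L_mf(f) = L_nscl(f) + C`, where `C = Σ_{x,x'} w(x,x')² / (w(x)·w(x'))` is a
constant not depending on `f`. -/
theorem nscl_loss_eq_mf_loss_add_const
    {Xl Xu X Yl : Type*} [Fintype Xl] [Fintype Xu] [Fintype X] [Fintype Yl]
    (k : ℕ)
    (p : Yl → Xl → ℝ) (pu : Xu → ℝ)
    (Tl : Xl → X → ℝ) (Tu : Xu → X → ℝ)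
    (hp_nonneg : ∀ i xb, 0 ≤ p i xb) (hp_sum : ∀ i, ∑ xb, p i xb = 1)
    (hpu_nonneg : ∀ xb, 0 ≤ pu xb) (hpu_sum : ∑ xb, pu xb = 1)
    (hTl_nonneg : ∀ xb x, 0 ≤ Tl xb x) (hTl_sum : ∀ xb, ∑ x, Tl xb x = 1)
    (hTu_nonneg : ∀ xb x, 0 ≤ Tu xb x) (hTu_sum : ∀ xb, ∑ x, Tu xb x = 1)
    (α β : ℝ) (hα : 0 < α) (hβ : 0 < β)
    (w : X → X → ℝ)
    (hw : ∀ x x', w x x' =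
      α * ∑ i, ∑ xb, ∑ xb', p i xb * p i xb' * Tl xb x * Tl xb' x'
      + β * ∑ xb, pu xb * Tu xb x * Tu xb x')
    (wt : X → ℝ) (hwt : ∀ x, wt x = ∑ x', w x x')
    (hwt_pos : ∀ x, 0 < wt x)
    (f : X → Fin k → ℝ) :
    -- L_mf(f)
    ∑ x, ∑ x', (w x x' / Real.sqrt (wt x * wt x')
        - Real.sqrt (wt x * wt x') * ∑ j, f x j * f x' j) ^ 2
    =
    -- L_nscl(f)
    (- 2 * α * (∑ i, ∑ xb, ∑ xb', ∑ x, ∑ xp,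
          p i xb * p i xb' * Tl xb x * Tl xb' xp * ∑ j, f x j * f xp j)
      - 2 * β * (∑ xb, ∑ x, ∑ xp,
          pu xb * Tu xb x * Tu xb xp * ∑ j, f x j * f xp j)
      + α ^ 2 * (∑ i, ∑ i', ∑ xb, ∑ xb', ∑ x, ∑ xm,
          p i xb * p i' xb' * Tl xb x * Tl xb' xm * (∑ j, f x j * f xm j) ^ 2)
      + 2 * α * β * (∑ i, ∑ xb, ∑ xbu, ∑ x, ∑ xm,
          p i xb * pu xbu * Tl xb x * Tu xbu xm * (∑ j, f x j * f xm j) ^ 2)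
      + β ^ 2 * (∑ xb, ∑ xb', ∑ x, ∑ xm,
          pu xb * pu xb' * Tu xb x * Tu xb' xm * (∑ j, f x j * f xm j) ^ 2))
    -- + C, a constant not depending on f
    + ∑ x, ∑ x', (w x x') ^ 2 / (wt x * wt x') := by
  have hsymm : ∀ x y, (∑ j, f x j * f y j) = ∑ j, f y j * f x j := fun x y =>
    Finset.sum_congr rfl fun j _ => mul_comm _ _
  generalize hG : (fun x y => ∑ j, f x j * f y j) = G
  have hG' : ∀ x y, (∑ j, f x j * f y j) = G x y := fun x y => by rw [← hG]
  simp only [hG'] at hsymm ⊢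
  obtain ⟨A, hA⟩ : ∃ A : X → X → ℝ, ∀ x x', A x x' =
      ∑ i, ∑ xb, ∑ xb', p i xb * p i xb' * Tl xb x * Tl xb' x' := ⟨_, fun _ _ => rfl⟩
  obtain ⟨B, hB⟩ : ∃ B : X → X → ℝ, ∀ x x', B x x' =
      ∑ xb, pu xb * Tu xb x * Tu xb x' := ⟨_, fun _ _ => rfl⟩
  obtain ⟨a, ha⟩ : ∃ a : X → ℝ, ∀ x, a x = ∑ i, ∑ xb, p i xb * Tl xb x := ⟨_, fun _ => rfl⟩
  obtain ⟨b, hb⟩ : ∃ b : X → ℝ, ∀ x, b x = ∑ xb, pu xb * Tu xb x := ⟨_, fun _ => rfl⟩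
  have hw2 : ∀ x y, w x y = α * A x y + β * B x y := fun x y => by rw [hw, hA, hB]
  have hAs : ∀ x, ∑ y, A x y = a x := by
    intro x
    simp only [hA, ha]
    rw [Finset.sum_comm]
    refine Finset.sum_congr rfl fun i _ => ?_
    rw [Finset.sum_comm]
    refine Finset.sum_congr rfl fun xb _ => ?_
    rw [Finset.sum_comm]
    simp only [← Finset.mul_sum, hTl_sum, mul_one]
    rw [← Finset.sum_mul, ← Finset.mul_sum, hp_sum, mul_one]
  have hBs : ∀ x, ∑ y, B x y = b x := by
    intro x
    simp only [hB, hb]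
    rw [Finset.sum_comm]
    simp only [← Finset.mul_sum, hTu_sum, mul_one]
  have hwt2 : ∀ x, wt x = α * a x + β * b x := by
    intro x
    rw [hwt]
    simp only [hw2, Finset.sum_add_distrib, ← Finset.mul_sum, hAs, hBs]
  have h1 : (∑ i, ∑ xb, ∑ xb', ∑ x, ∑ xp,
      p i xb * p i xb' * Tl xb x * Tl xb' xp * G x xp) = ∑ x, ∑ y, A x y * G x y := by
    simp only [aux_swap (S := Yl) (X := X), aux_swap (S := Xl) (X := X), aux_swap (S := Xu) (X := X), hA, Finset.sum_mul]
  have h2 : (∑ xb, ∑ x, ∑ xp, pu xb * Tu xb x * Tu xb xp * G x xp)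
      = ∑ x, ∑ y, B x y * G x y := by
    simp only [aux_swap (S := Yl) (X := X), aux_swap (S := Xl) (X := X), aux_swap (S := Xu) (X := X), hB, Finset.sum_mul]
  have h3 : (∑ i, ∑ i', ∑ xb, ∑ xb', ∑ x, ∑ xm,
      p i xb * p i' xb' * Tl xb x * Tl xb' xm * (G x xm) ^ 2)
      = ∑ x, ∑ y, a x * a y * G x y ^ 2 := by
    simp only [aux_swap (S := Yl) (X := X), aux_swap (S := Xl) (X := X), aux_swap (S := Xu) (X := X)]
    refine Finset.sum_congr rfl fun x _ => Finset.sum_congr rfl fun y _ => ?_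
    rw [ha, ha, Finset.sum_mul_sum, Finset.sum_mul]
    refine Finset.sum_congr rfl fun i _ => ?_
    rw [Finset.sum_mul]
    refine Finset.sum_congr rfl fun i' _ => ?_
    rw [Finset.sum_mul_sum, Finset.sum_mul]
    refine Finset.sum_congr rfl fun xb _ => ?_
    rw [Finset.sum_mul]
    exact Finset.sum_congr rfl fun xb' _ => by ring
  have h4 : (∑ i, ∑ xb, ∑ xbu, ∑ x, ∑ xm,
      p i xb * pu xbu * Tl xb x * Tu xbu xm * (G x xm) ^ 2)
      = ∑ x, ∑ y, a x * b y * G x y ^ 2 := by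
    simp only [aux_swap (S := Yl) (X := X), aux_swap (S := Xl) (X := X), aux_swap (S := Xu) (X := X)]
    refine Finset.sum_congr rfl fun x _ => Finset.sum_congr rfl fun y _ => ?_
    rw [ha, hb, Finset.sum_mul, Finset.sum_mul]
    refine Finset.sum_congr rfl fun i _ => ?_
    rw [Finset.sum_mul_sum, Finset.sum_mul]
    refine Finset.sum_congr rfl fun xb _ => ?_
    rw [Finset.sum_mul]
    exact Finset.sum_congr rfl fun xb' _ => by ring
  have h5 : (∑ xb, ∑ xb', ∑ x, ∑ xm,
      pu xb * pu xb' * Tu xb x * Tu xb' xm * (G x xm) ^ 2)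
      = ∑ x, ∑ y, b x * b y * G x y ^ 2 := by
    simp only [aux_swap (S := Yl) (X := X), aux_swap (S := Xl) (X := X), aux_swap (S := Xu) (X := X)]
    refine Finset.sum_congr rfl fun x _ => Finset.sum_congr rfl fun y _ => ?_
    rw [hb, hb, Finset.sum_mul_sum, Finset.sum_mul]
    refine Finset.sum_congr rfl fun xb _ => ?_
    rw [Finset.sum_mul]
    exact Finset.sum_congr rfl fun xb' _ => by ring
  have h6 : ∑ x, ∑ y, b x * a y * G x y ^ 2 = ∑ x, ∑ y, a x * b y * G x y ^ 2 := by
    rw [Finset.sum_comm]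
    refine Finset.sum_congr rfl fun x _ => Finset.sum_congr rfl fun y _ => ?_
    rw [hsymm y x]
    ring
  have hterm : ∀ x y, (w x y / Real.sqrt (wt x * wt y) - Real.sqrt (wt x * wt y) * G x y) ^ 2
      = (-2 * α) * (A x y * G x y) + (-2 * β) * (B x y * G x y)
        + α ^ 2 * (a x * a y * G x y ^ 2) + α * β * (a x * b y * G x y ^ 2)
        + α * β * (b x * a y * G x y ^ 2) + β ^ 2 * (b x * b y * G x y ^ 2)
        + w x y ^ 2 / (wt x * wt y) := by
    intro x y
    have hpos : 0 < wt x * wt y := mul_pos (hwt_pos x) (hwt_pos y)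
    have hs : Real.sqrt (wt x * wt y) ^ 2 = wt x * wt y := Real.sq_sqrt hpos.le
    have hs0 : Real.sqrt (wt x * wt y) ≠ 0 := (Real.sqrt_pos.mpr hpos).ne'
    have e : (w x y / Real.sqrt (wt x * wt y) - Real.sqrt (wt x * wt y) * G x y) ^ 2
        = w x y ^ 2 / Real.sqrt (wt x * wt y) ^ 2 - 2 * w x y * G x y
          + Real.sqrt (wt x * wt y) ^ 2 * G x y ^ 2 := by
      field_simp
      ring
    rw [e, hs]
    have e2 : wt x * wt y * G x y ^ 2
        = (α * a x + β * b x) * (α * a y + β * b y) * G x y ^ 2 := by rw [hwt2 x, hwt2 y]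
    have e3 : 2 * w x y * G x y = 2 * (α * A x y + β * B x y) * G x y := by rw [hw2]
    rw [e2, e3]
    ring
  rw [h1, h2, h3, h4, h5]
  simp only [hterm, Finset.sum_add_distrib, ← Finset.mul_sum]
  rw [h6]
  ring
end

section
/- For every y ∈ ℝ^{N_u}: the infimum over μ ∈ ℝ^k of ‖y − U*·μ‖₂² equals the infimum over ζ ∈ ℝ^{N_l} of ‖(L♭)ᵀ·ζ + (U♭)ᵀ·y‖₂², and both equal the squared Euclidean distance from the vector (U♭)ᵀ·y ∈ ℝ^{N−k} to the column space of (L♭)ᵀ (equivalently, the squared norm of the component of (U♭)ᵀ·y orthogonal to the column space of (L♭)ᵀ). -/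
open Matrix

/-- The key identity, obtained from `‖Vᵀ w‖² = ‖w‖²` for `w = (ζ, y) - V (μ, 0)`. -/
theorem key_identity
    (Nl Nu k m : ℕ) (hkm : k + m = Nl + Nu)
    (V : Matrix (Fin Nl ⊕ Fin Nu) (Fin k ⊕ Fin m) ℝ)
    (hV : Vᵀ * V = 1) (y : Fin Nu → ℝ) (ζ : Fin Nl → ℝ) (μ : Fin k → ℝ) :
    ∑ a, ((V.toBlocks₁₁ᵀ *ᵥ ζ) a + (V.toBlocks₂₁ᵀ *ᵥ y) a - μ a) ^ 2
      + ∑ a, ((V.toBlocks₁₂ᵀ *ᵥ ζ) a + (V.toBlocks₂₂ᵀ *ᵥ y) a) ^ 2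
    = ∑ i, (ζ i - (V.toBlocks₁₁ *ᵥ μ) i) ^ 2 + ∑ i, (y i - (V.toBlocks₂₁ *ᵥ μ) i) ^ 2 := by
  have hV' : V * Vᵀ = 1 := by
    refine (Matrix.mul_eq_one_comm_of_card_eq _ _ _ ?_).1 hV
    simp [hkm]
  have h1 : ∀ w, (Vᵀ *ᵥ w) ⬝ᵥ (Vᵀ *ᵥ w) = w ⬝ᵥ w := by
    intro w
    rw [Matrix.dotProduct_mulVec, Matrix.vecMul_transpose, Matrix.mulVec_mulVec, hV',
      Matrix.one_mulVec]
  have h2 := h1 (Sum.elim ζ y - V *ᵥ Sum.elim μ 0)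
  rw [Matrix.mulVec_sub, Matrix.mulVec_mulVec, hV, Matrix.one_mulVec] at h2
  have e1 : V *ᵥ Sum.elim μ 0 = Sum.elim (V.toBlocks₁₁ *ᵥ μ) (V.toBlocks₂₁ *ᵥ μ) := by
    conv_lhs => rw [← Matrix.fromBlocks_toBlocks V, Matrix.fromBlocks_mulVec]
    simp
  have e2 : Vᵀ *ᵥ Sum.elim ζ y = Sum.elim (V.toBlocks₁₁ᵀ *ᵥ ζ + V.toBlocks₂₁ᵀ *ᵥ y)
      (V.toBlocks₁₂ᵀ *ᵥ ζ + V.toBlocks₂₂ᵀ *ᵥ y) := by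
    conv_lhs => rw [← Matrix.fromBlocks_toBlocks V, Matrix.fromBlocks_transpose,
      Matrix.fromBlocks_mulVec]
    simp
  rw [e1, e2] at h2
  simpa [dotProduct, Fintype.sum_sum_type, ← sq] using h2

/-- For an orthogonal matrix `V` partitioned into blocks `L*, U*, L♭, U♭`, the
least-squares residual `min_μ ‖y − U*μ‖²` equals `min_ζ ‖(L♭)ᵀζ + (U♭)ᵀy‖²`, and
both equal the squared Euclidean distance from `(U♭)ᵀy` to the column space of
`(L♭)ᵀ`. -/
theorem residual_eq_dist_to_extra_knowledge
    (Nl Nu k m : ℕ) (hkm : k + m = Nl + Nu)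
    (V : Matrix (Fin Nl ⊕ Fin Nu) (Fin k ⊕ Fin m) ℝ)
    (hV : Vᵀ * V = 1)
    (Ustar : Matrix (Fin Nu) (Fin k) ℝ)
    (hUstar : ∀ i a, Ustar i a = V (Sum.inr i) (Sum.inl a))
    (Lb : Matrix (Fin Nl) (Fin m) ℝ)
    (hLb : ∀ i a, Lb i a = V (Sum.inl i) (Sum.inr a))
    (Ub : Matrix (Fin Nu) (Fin m) ℝ)
    (hUb : ∀ i a, Ub i a = V (Sum.inr i) (Sum.inr a))
    (y : Fin Nu → ℝ) :
    sInf {r : ℝ | ∃ μ : Fin k → ℝ, r = ∑ i, (y i - (Ustar *ᵥ μ) i) ^ 2}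
      = sInf {r : ℝ | ∃ ζ : Fin Nl → ℝ, r = ∑ a, ((Lbᵀ *ᵥ ζ) a + (Ubᵀ *ᵥ y) a) ^ 2}
    ∧ sInf {r : ℝ | ∃ μ : Fin k → ℝ, r = ∑ i, (y i - (Ustar *ᵥ μ) i) ^ 2}
      = sInf {r : ℝ | ∃ v ∈ LinearMap.range (Lbᵀ).mulVecLin,
          r = ∑ a, ((Ubᵀ *ᵥ y) a - v a) ^ 2} := by
  have e1 : Ustar = V.toBlocks₂₁ := by ext i a; exact hUstar i a
  have e2 : Lb = V.toBlocks₁₂ := by ext i a; exact hLb i a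
  have e3 : Ub = V.toBlocks₂₂ := by ext i a; exact hUb i a
  have key := key_identity Nl Nu k m hkm V hV y
  rw [← e1, ← e2, ← e3] at key
  have hS : sInf {r : ℝ | ∃ μ : Fin k → ℝ, r = ∑ i, (y i - (Ustar *ᵥ μ) i) ^ 2}
      = sInf {r : ℝ | ∃ ζ : Fin Nl → ℝ,
          r = ∑ a, ((Lbᵀ *ᵥ ζ) a + (Ubᵀ *ᵥ y) a) ^ 2} := by
    apply le_antisymm
    · refine le_csInf ⟨_, 0, rfl⟩ ?_
      rintro r ⟨ζ, rfl⟩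
      have h := key ζ (V.toBlocks₁₁ᵀ *ᵥ ζ + Ustarᵀ *ᵥ y)
      refine le_trans (csInf_le ⟨0, ?_⟩ ⟨V.toBlocks₁₁ᵀ *ᵥ ζ + Ustarᵀ *ᵥ y, rfl⟩) ?_
      · rintro r ⟨μ, rfl⟩
        positivity
      · have h0 : ∑ a, ((V.toBlocks₁₁ᵀ *ᵥ ζ) a + (Ustarᵀ *ᵥ y) a
            - (V.toBlocks₁₁ᵀ *ᵥ ζ + Ustarᵀ *ᵥ y) a) ^ 2 = 0 := by simp
        have h1 : 0 ≤ ∑ i, (ζ i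
            - (V.toBlocks₁₁ *ᵥ (V.toBlocks₁₁ᵀ *ᵥ ζ + Ustarᵀ *ᵥ y)) i) ^ 2 := by positivity
        linarith
    · refine le_csInf ⟨_, 0, rfl⟩ ?_
      rintro r ⟨μ, rfl⟩
      have h := key (V.toBlocks₁₁ *ᵥ μ) μ
      refine le_trans (csInf_le ⟨0, ?_⟩ ⟨V.toBlocks₁₁ *ᵥ μ, rfl⟩) ?_
      · rintro r ⟨ζ, rfl⟩
        positivity
      · have h0 : ∑ i, ((V.toBlocks₁₁ *ᵥ μ) i - (V.toBlocks₁₁ *ᵥ μ) i) ^ 2 = 0 := by simp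
        have h1 : 0 ≤ ∑ a, ((V.toBlocks₁₁ᵀ *ᵥ (V.toBlocks₁₁ *ᵥ μ)) a + (Ustarᵀ *ᵥ y) a
            - μ a) ^ 2 := by positivity
        linarith
  refine ⟨hS, hS.trans ?_⟩
  congr 1
  ext r
  constructor
  · rintro ⟨ζ, rfl⟩
    refine ⟨Lbᵀ *ᵥ (-ζ), ⟨-ζ, rfl⟩, ?_⟩
    refine Finset.sum_congr rfl fun a _ => ?_
    rw [Matrix.mulVec_neg, Pi.neg_apply]
    ring
  · rintro ⟨v, ⟨ζ, rfl⟩, rfl⟩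
    refine ⟨-ζ, Finset.sum_congr rfl fun a _ => ?_⟩
    rw [Matrix.mulVec_neg, Pi.neg_apply, Matrix.mulVecLin_apply]
    ring
end

section
/- For every y ∈ ℝ^{N_u}: the infimum over μ ∈ ℝ^k of ‖y − U*·μ‖₂² equals 0 if and only if the vector (U♭)ᵀ·y ∈ ℝ^{N−k} lies in the column space of (L♭)ᵀ (i.e., the row space of L♭). -/
open Matrix

/-- For an orthogonal matrix `V` partitioned into blocks `L*, U*, L♭, U♭`, the
least-squares residual `min_μ ‖y − U*μ‖²` is zero if and only if `(U♭)ᵀy` lies in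
the column space of `(L♭)ᵀ` (i.e. the row space of `L♭`). -/
theorem residual_eq_zero_iff_mem_rowspace
    (Nl Nu k m : ℕ) (hkm : k + m = Nl + Nu)
    (V : Matrix (Fin Nl ⊕ Fin Nu) (Fin k ⊕ Fin m) ℝ)
    (hV : Vᵀ * V = 1)
    (Ustar : Matrix (Fin Nu) (Fin k) ℝ)
    (hUstar : ∀ i a, Ustar i a = V (Sum.inr i) (Sum.inl a))
    (Lb : Matrix (Fin Nl) (Fin m) ℝ)
    (hLb : ∀ i a, Lb i a = V (Sum.inl i) (Sum.inr a))
    (Ub : Matrix (Fin Nu) (Fin m) ℝ)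
    (hUb : ∀ i a, Ub i a = V (Sum.inr i) (Sum.inr a))
    (y : Fin Nu → ℝ) :
    sInf {r : ℝ | ∃ μ : Fin k → ℝ, r = ∑ i, (y i - (Ustar *ᵥ μ) i) ^ 2} = 0
      ↔ (Ubᵀ *ᵥ y) ∈ LinearMap.range (Lbᵀ).mulVecLin := by
  have hV' : V * Vᵀ = 1 :=
    (Matrix.mul_eq_one_comm_of_card_eq _ _ _ (by simp [hkm])).mp hV
  have key : (∃ μ, Ustar *ᵥ μ = y) ↔ (Ubᵀ *ᵥ y) ∈ LinearMap.range (Lbᵀ).mulVecLin := by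
    constructor
    · rintro ⟨μ, rfl⟩
      have h : Vᵀ *ᵥ (V *ᵥ (Sum.elim μ 0)) = Sum.elim μ 0 := by
        rw [Matrix.mulVec_mulVec, hV, Matrix.one_mulVec]
      refine ⟨fun i => -((V *ᵥ (Sum.elim μ 0)) (Sum.inl i)), ?_⟩
      ext a
      have ha := congrFun h (Sum.inr a)
      simp only [Matrix.mulVec, dotProduct, Fintype.sum_sum_type, Matrix.transpose_apply,
        Sum.elim_inl, Sum.elim_inr, Pi.zero_apply, mul_zero, Finset.sum_const_zero,
        add_zero] at ha
      simp only [Matrix.mulVecLin_apply, Matrix.mulVec, dotProduct, Fintype.sum_sum_type,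
        Matrix.transpose_apply, Sum.elim_inl, Sum.elim_inr, Pi.zero_apply, mul_zero,
        Finset.sum_const_zero, add_zero, hLb, hUb, hUstar, mul_neg, Finset.sum_neg_distrib]
      linarith
    · rintro ⟨w, hw⟩
      have h : V *ᵥ (Vᵀ *ᵥ (Sum.elim (-w) y)) = Sum.elim (-w) y := by
        rw [Matrix.mulVec_mulVec, hV', Matrix.one_mulVec]
      have h0 : ∀ a, (Vᵀ *ᵥ (Sum.elim (-w) y)) (Sum.inr a) = 0 := by
        intro a
        have ha := congrFun hw a
        simp only [Matrix.mulVecLin_apply, Matrix.mulVec, dotProduct,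
          Matrix.transpose_apply, hLb, hUb] at ha
        simp only [Matrix.mulVec, dotProduct, Fintype.sum_sum_type, Matrix.transpose_apply,
          Sum.elim_inl, Sum.elim_inr, Pi.neg_apply, mul_neg, Finset.sum_neg_distrib]
        linarith
      generalize Vᵀ *ᵥ (Sum.elim (-w) y) = x at h h0
      refine ⟨fun a => x (Sum.inl a), ?_⟩
      ext i
      have hi := congrFun h (Sum.inr i)
      simp only [Matrix.mulVec, dotProduct, Fintype.sum_sum_type, Sum.elim_inr, h0, mul_zero,
        Finset.sum_const_zero, add_zero] at hi
      simpa only [Matrix.mulVec, dotProduct, hUstar] using hi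
  rw [← key]
  have hbdd : ∀ r ∈ {r : ℝ | ∃ μ : Fin k → ℝ, r = ∑ i, (y i - (Ustar *ᵥ μ) i) ^ 2}, 0 ≤ r := by
    rintro r ⟨μ, rfl⟩
    positivity
  constructor
  · intro h
    have hc : IsClosed ((LinearMap.range Ustar.mulVecLin : Submodule ℝ (Fin Nu → ℝ)) :
        Set (Fin Nu → ℝ)) := Submodule.closed_of_finiteDimensional _
    have hy : y ∈ closure ((LinearMap.range Ustar.mulVecLin : Submodule ℝ (Fin Nu → ℝ)) :
        Set (Fin Nu → ℝ)) := by
      rw [Metric.mem_closure_iff]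
      intro ε hε
      obtain ⟨r, ⟨μ, rfl⟩, hr⟩ := exists_lt_of_csInf_lt
        (s := {r : ℝ | ∃ μ : Fin k → ℝ, r = ∑ i, (y i - (Ustar *ᵥ μ) i) ^ 2})
        ⟨_, 0, rfl⟩ (b := ε ^ 2) (by rw [h]; positivity)
      refine ⟨Ustar *ᵥ μ, ⟨μ, rfl⟩, ?_⟩
      rw [dist_pi_lt_iff hε]
      intro i
      rw [Real.dist_eq]
      apply abs_lt_of_sq_lt_sq _ hε.le
      exact lt_of_le_of_lt (Finset.single_le_sum
        (f := fun i => (y i - (Ustar *ᵥ μ) i) ^ 2) (fun j _ => sq_nonneg _)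
        (Finset.mem_univ i)) hr
    rw [hc.closure_eq] at hy
    exact hy
  · rintro ⟨μ, hμ⟩
    apply le_antisymm
    · exact csInf_le ⟨0, hbdd⟩ ⟨μ, by simp [hμ]⟩
    · exact Real.sInf_nonneg hbdd
end

section
/- Suppose additionally that the first N_l rows of the first k columns of V are all identical (i.e., all rows of L* are equal), and that 𝔩♭ := (L♭)ᵀ·𝟙_{N_l} ∈ ℝ^{N−k} is nonzero, where 𝟙_{N_l} is the all-ones vector. Then for every y ∈ ℝ^{N_u}: the infimum over μ ∈ ℝ^k of ‖y − U*·μ‖₂² equals ‖(U♭)ᵀ·y‖₂² − (⟨𝔩♭, (U♭)ᵀ·y⟩)² / ‖𝔩♭‖₂². Equivalently, writing κ for the cosine of the angle between (U♭)ᵀ·y and 𝔩♭ (when (U♭)ᵀ·y ≠ 0), the residual equals (1 − κ²)·‖(U♭)ᵀ·y‖₂². -/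
open Matrix

/-- When all rows of `L*` are identical and `𝔩♭ = (L♭)ᵀ𝟙 ≠ 0`, the least-squares
residual equals `‖(U♭)ᵀy‖² − ⟨𝔩♭,(U♭)ᵀy⟩²/‖𝔩♭‖²`, i.e. `(1 − κ²)·‖(U♭)ᵀy‖²` where
`κ` is the cosine of the angle between `(U♭)ᵀy` and `𝔩♭`. -/
theorem residual_eq_one_sub_cos_sq
    (Nl Nu k m : ℕ) (hNl : 1 ≤ Nl) (hkm : k + m = Nl + Nu)
    (V : Matrix (Fin Nl ⊕ Fin Nu) (Fin k ⊕ Fin m) ℝ)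
    (hV : Vᵀ * V = 1)
    (Ustar : Matrix (Fin Nu) (Fin k) ℝ)
    (hUstar : ∀ i a, Ustar i a = V (Sum.inr i) (Sum.inl a))
    (Lb : Matrix (Fin Nl) (Fin m) ℝ)
    (hLb : ∀ i a, Lb i a = V (Sum.inl i) (Sum.inr a))
    (Ub : Matrix (Fin Nu) (Fin m) ℝ)
    (hUb : ∀ i a, Ub i a = V (Sum.inr i) (Sum.inr a))
    (hrows : ∀ i i' : Fin Nl, ∀ a : Fin k,
      V (Sum.inl i) (Sum.inl a) = V (Sum.inl i') (Sum.inl a))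
    (lb : Fin m → ℝ) (hlb : lb = Lbᵀ *ᵥ (fun _ => 1))
    (hlb_ne : lb ≠ 0)
    (y : Fin Nu → ℝ) :
    sInf {r : ℝ | ∃ μ : Fin k → ℝ, r = ∑ i, (y i - (Ustar *ᵥ μ) i) ^ 2}
      = (∑ a, ((Ubᵀ *ᵥ y) a) ^ 2)
        - (∑ a, lb a * (Ubᵀ *ᵥ y) a) ^ 2 / (∑ a, (lb a) ^ 2) := by
  obtain ⟨Ls, hLs⟩ : ∃ Ls : Matrix (Fin Nl) (Fin k) ℝ,
      ∀ i a, Ls i a = V (Sum.inl i) (Sum.inl a) := ⟨fun i a => V (Sum.inl i) (Sum.inl a), fun _ _ => rfl⟩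
  have hVb : V = fromBlocks Ls Lb Ustar Ub := by
    ext i j
    rcases i with i | i <;> rcases j with j | j <;> simp [hLs, hLb, hUstar, hUb]
  have e : (Fin k ⊕ Fin m) ≃ (Fin Nl ⊕ Fin Nu) := Fintype.equivOfCardEq (by simpa using hkm)
  have hV' : V * Vᵀ = 1 := (Matrix.mul_eq_one_comm_of_equiv e).1 hV
  have hconst : ∀ x : Fin k → ℝ, ∃ d : ℝ, Ls *ᵥ x = d • (fun _ => (1:ℝ)) := by
    intro x
    refine ⟨(Ls *ᵥ x) ⟨0, hNl⟩, ?_⟩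
    ext i
    simp only [Pi.smul_apply, smul_eq_mul, mul_one, mulVec, dotProduct]
    refine Finset.sum_congr rfl fun a _ => ?_
    rw [hLs, hLs, hrows i ⟨0, hNl⟩]
  rw [hVb, fromBlocks_transpose, fromBlocks_multiply, ← fromBlocks_one, fromBlocks_inj] at hV hV'
  obtain ⟨-, h12, -, h22⟩ := hV
  obtain ⟨g11, g12, g21, g22⟩ := hV'
  set o : Fin Nl → ℝ := fun _ => 1 with ho
  set b := Ubᵀ *ᵥ y with hb
  obtain ⟨c, hc⟩ : ∃ c : ℝ, Lb *ᵥ b = c • o := by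
    obtain ⟨d, hd⟩ := hconst (Ustarᵀ *ᵥ y)
    refine ⟨-d, ?_⟩
    have h := congrArg (fun M => M *ᵥ y) g12
    simp only [add_mulVec, ← mulVec_mulVec, zero_mulVec] at h
    rw [hd] at h
    rw [neg_smul]
    exact eq_neg_of_add_eq_zero_right h
  obtain ⟨s, hs⟩ : ∃ s : ℝ, Lb *ᵥ lb = s • o := by
    obtain ⟨d, hd⟩ := hconst (Lsᵀ *ᵥ o)
    refine ⟨1 - d, ?_⟩
    have h := congrArg (fun M => M *ᵥ o) g11
    simp only [add_mulVec, ← mulVec_mulVec, one_mulVec] at h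
    rw [hd, ← hlb] at h
    rw [sub_smul, one_smul]
    exact eq_sub_of_add_eq' h
  have hoo : o ⬝ᵥ o = Nl := by simp [ho, dotProduct]
  have hlbx : ∀ x, lb ⬝ᵥ x = o ⬝ᵥ (Lb *ᵥ x) := by
    intro x
    rw [hlb, mulVec_transpose, dotProduct_mulVec]
  have hlbb : lb ⬝ᵥ b = c * Nl := by
    rw [hlbx, hc, dotProduct_smul, hoo, smul_eq_mul]
  have hlblb : lb ⬝ᵥ lb = s * Nl := by
    rw [hlbx, hs, dotProduct_smul, hoo, smul_eq_mul]
  have hne : lb ⬝ᵥ lb ≠ 0 := fun h => hlb_ne (dotProduct_self_eq_zero.1 h)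
  have hs0 : s ≠ 0 := by
    rintro rfl
    simp [hlblb] at hne
  have hNl0 : (Nl : ℝ) ≠ 0 := by positivity
  set α : ℝ := c / s with hα
  set w := b - α • lb with hw
  have hLw : Lb *ᵥ w = 0 := by
    rw [hw, mulVec_sub, mulVec_smul, hc, hs, smul_smul, hα, div_mul_cancel₀ _ hs0, sub_self]
  set z := Ub *ᵥ w with hz
  have hUz : Ustarᵀ *ᵥ z = 0 := by
    have h := congrArg (fun M => M *ᵥ w) h12
    simp only [add_mulVec, ← mulVec_mulVec, zero_mulVec] at h
    rwa [hLw, mulVec_zero, zero_add] at h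
  have hUbz : Ubᵀ *ᵥ z = w := by
    have h := congrArg (fun M => M *ᵥ w) h22
    simp only [add_mulVec, ← mulVec_mulVec, one_mulVec] at h
    rwa [hLw, mulVec_zero, zero_add] at h
  have hzz : z ⬝ᵥ z = w ⬝ᵥ w := by
    conv_lhs => rw [hz, dotProduct_comm, dotProduct_mulVec, ← mulVec_transpose, ← hz, hUbz]
  have hval : w ⬝ᵥ w = b ⬝ᵥ b - (lb ⬝ᵥ b) ^ 2 / (lb ⬝ᵥ lb) := by
    have : w ⬝ᵥ w = b ⬝ᵥ b - 2 * α * (lb ⬝ᵥ b) + α ^ 2 * (lb ⬝ᵥ lb) := by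
      simp only [hw, sub_dotProduct, dotProduct_sub, smul_dotProduct, dotProduct_smul, smul_eq_mul,
        dotProduct_comm b lb]
      ring
    rw [this, hlbb, hlblb, hα]
    field_simp
    ring
  have hUblb : Ub *ᵥ lb = - (Ustar *ᵥ (Lsᵀ *ᵥ o)) := by
    have h := congrArg (fun M => M *ᵥ o) g21
    simp only [add_mulVec, ← mulVec_mulVec, zero_mulVec] at h
    rw [← hlb] at h
    exact eq_neg_of_add_eq_zero_right h
  obtain ⟨μ₀, hμ₀⟩ : ∃ μ₀ : Fin k → ℝ, y = Ustar *ᵥ μ₀ + z := by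
    refine ⟨Ustarᵀ *ᵥ y - α • (Lsᵀ *ᵥ o), ?_⟩
    have h := congrArg (fun M => M *ᵥ y) g22
    simp only [add_mulVec, ← mulVec_mulVec, one_mulVec] at h
    rw [hz, hw, mulVec_sub, mulVec_sub, mulVec_smul, mulVec_smul, hUblb, hb]
    conv_lhs => rw [← h]
    simp only [smul_neg]
    abel
  have hres : ∀ μ : Fin k → ℝ, ∑ i, (y i - (Ustar *ᵥ μ) i) ^ 2
      = z ⬝ᵥ z + (Ustar *ᵥ (μ₀ - μ)) ⬝ᵥ (Ustar *ᵥ (μ₀ - μ)) := by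
    intro μ
    have h1 : ∑ i, (y i - (Ustar *ᵥ μ) i) ^ 2 = (y - Ustar *ᵥ μ) ⬝ᵥ (y - Ustar *ᵥ μ) := by
      simp [dotProduct, sq]
    have h2 : y - Ustar *ᵥ μ = z + Ustar *ᵥ (μ₀ - μ) := by
      rw [mulVec_sub]
      conv_lhs => rw [hμ₀]
      abel
    have h3 : z ⬝ᵥ (Ustar *ᵥ (μ₀ - μ)) = 0 := by
      rw [dotProduct_mulVec, ← mulVec_transpose, hUz, zero_dotProduct]
    rw [h1, h2, add_dotProduct, dotProduct_add, dotProduct_add, h3,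
      dotProduct_comm (Ustar *ᵥ (μ₀ - μ)) z, h3]
    ring
  have hgoal : (∑ a, (b a) ^ 2) - (∑ a, lb a * b a) ^ 2 / (∑ a, (lb a) ^ 2) = z ⬝ᵥ z := by
    rw [hzz, hval]
    simp [dotProduct, sq]
  rw [hgoal]
  refine IsLeast.csInf_eq ⟨⟨μ₀, ?_⟩, ?_⟩
  · rw [hres]
    simp
  · rintro r ⟨μ, rfl⟩
    rw [hres]
    have : 0 ≤ (Ustar *ᵥ (μ₀ - μ)) ⬝ᵥ (Ustar *ᵥ (μ₀ - μ)) :=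
      Finset.sum_nonneg fun i _ => mul_self_nonneg _
    linarith
end

section
/- For every nonzero x ∈ ℝ^n: (min over pairs i,j ∈ {1,…,n} of 2√(ω_i·ω_j)/(ω_i + ω_j)) · ‖Ω·x‖₂ · ‖x‖₂ ≤ xᵀΩx ≤ ‖Ω·x‖₂ · ‖x‖₂. In particular, the cosine of the angle between x and Ωx is at least the minimum over all pairs i,j of 2√(ω_iω_j)/(ω_i+ω_j), and at most 1. -/
open Matrix

/-- For a positive diagonal matrix `Ω = diag(ω)` and every nonzero `x`,
`(min_{i,j} 2√(ω_iω_j)/(ω_i+ω_j))·‖Ωx‖₂·‖x‖₂ ≤ xᵀΩx ≤ ‖Ωx‖₂·‖x‖₂`. -/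
theorem diagonal_quadratic_form_cosine_bounds
    (n : ℕ) (hn : 0 < n) (ω : Fin n → ℝ) (hω : ∀ i, 0 < ω i)
    (x : Fin n → ℝ) (hx : x ≠ 0) :
    (Finset.univ.inf' ⟨(⟨0, hn⟩, ⟨0, hn⟩), Finset.mem_univ _⟩
        (fun p : Fin n × Fin n => 2 * Real.sqrt (ω p.1 * ω p.2) / (ω p.1 + ω p.2)))
        * Real.sqrt (∑ i, ((Matrix.diagonal ω *ᵥ x) i) ^ 2)
        * Real.sqrt (∑ i, (x i) ^ 2)
      ≤ x ⬝ᵥ (Matrix.diagonal ω *ᵥ x)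
    ∧ x ⬝ᵥ (Matrix.diagonal ω *ᵥ x)
      ≤ Real.sqrt (∑ i, ((Matrix.diagonal ω *ᵥ x) i) ^ 2)
        * Real.sqrt (∑ i, (x i) ^ 2) := by
  have hne : Nonempty (Fin n) := ⟨⟨0, hn⟩⟩
  obtain ⟨a, ha⟩ := Finite.exists_max ω
  obtain ⟨b, hb⟩ := Finite.exists_min ω
  have hQ : x ⬝ᵥ (Matrix.diagonal ω *ᵥ x) = ∑ i, x i * (ω i * x i) := by
    simp [dotProduct, Matrix.mulVec_diagonal]
  have hA : ∑ i, ((Matrix.diagonal ω *ᵥ x) i) ^ 2 = ∑ i, (ω i * x i) ^ 2 := by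
    simp [Matrix.mulVec_diagonal]
  rw [hQ, hA]
  constructor
  · have hmin := Finset.inf'_le
      (fun p : Fin n × Fin n => 2 * Real.sqrt (ω p.1 * ω p.2) / (ω p.1 + ω p.2))
      (Finset.mem_univ (b, a))
    have hab : 0 < ω b + ω a := add_pos (hω b) (hω a)
    have hsum : ∑ i, (ω i * x i) ^ 2 + ω b * ω a * ∑ i, (x i) ^ 2
        ≤ (ω b + ω a) * ∑ i, x i * (ω i * x i) := by
      rw [Finset.mul_sum, Finset.mul_sum, ← Finset.sum_add_distrib]
      refine Finset.sum_le_sum fun i _ => ?_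
      have := mul_nonneg (mul_nonneg (sub_nonneg.2 (hb i)) (sub_nonneg.2 (ha i))) (sq_nonneg (x i))
      nlinarith
    have hA0 : 0 ≤ ∑ i, (ω i * x i) ^ 2 := Finset.sum_nonneg fun i _ => sq_nonneg _
    have hB0 : 0 ≤ ∑ i, (x i) ^ 2 := Finset.sum_nonneg fun i _ => sq_nonneg _
    have hm0 : 0 ≤ ω b * ω a := (mul_pos (hω b) (hω a)).le
    generalize ∑ i, (ω i * x i) ^ 2 = A at *
    generalize ∑ i, (x i) ^ 2 = B at *
    generalize ∑ i, x i * (ω i * x i) = Q at *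
    rw [mul_assoc]
    refine (mul_le_mul_of_nonneg_right hmin (by positivity)).trans ?_
    rw [div_mul_eq_mul_div, div_le_iff₀ hab]
    have h1 := two_mul_le_add_sq (Real.sqrt A) (Real.sqrt (ω b * ω a) * Real.sqrt B)
    rw [mul_pow, Real.sq_sqrt hA0, Real.sq_sqrt hB0, Real.sq_sqrt hm0] at h1
    dsimp only
    linarith
  · have h := Real.sum_mul_le_sqrt_mul_sqrt Finset.univ x (fun i => ω i * x i)
    rw [mul_comm]
    exact h
end

section
/- Assume τ_c > 0, τ_s > 0, and 0 < t ≤ τ_c. Then the cubic g has a root in each of the three intervals (−τ_c − τ_s, 0), (0, τ_c), and (τ_c + τ_s, ∞); consequently g has exactly three real roots z₅ < z₄ < z₃ satisfying −τ_c − τ_s < z₅ < 0 < z₄ < τ_c < τ_c + τ_s < z₃. -/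
/-- The cubic `g(z) = z³ − 2τ_c z² + (τ_c² − τ_s² − 2t²)z + 2τ_c t²` has exactly three
real roots `z₅ < z₄ < z₃` with `−τ_c − τ_s < z₅ < 0 < z₄ < τ_c < τ_c + τ_s < z₃`,
provided `τ_c, τ_s > 0` and `0 < t ≤ τ_c`. -/
theorem cubic_three_roots
    (τc τs t : ℝ) (hτc : 0 < τc) (hτs : 0 < τs) (ht : 0 < t) (htc : t ≤ τc)
    (g : ℝ → ℝ)
    (hg : ∀ z, g z = z ^ 3 - 2 * τc * z ^ 2 + (τc ^ 2 - τs ^ 2 - 2 * t ^ 2) * z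
        + 2 * τc * t ^ 2) :
    ∃ z₅ z₄ z₃ : ℝ,
      g z₅ = 0 ∧ g z₄ = 0 ∧ g z₃ = 0 ∧
      -τc - τs < z₅ ∧ z₅ < 0 ∧ 0 < z₄ ∧ z₄ < τc ∧ τc + τs < z₃ ∧
      (∀ z, g z = 0 → z = z₅ ∨ z = z₄ ∨ z = z₃) := by
  have hc : Continuous g := by
    have : g = fun z => z ^ 3 - 2 * τc * z ^ 2 + (τc ^ 2 - τs ^ 2 - 2 * t ^ 2) * z
        + 2 * τc * t ^ 2 := funext hg
    rw [this]; fun_prop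
  have h0 : 0 < g 0 := by
    rw [hg]; ring_nf; positivity
  have h1 : g τc < 0 := by
    have : g τc = -(τc * τs ^ 2) := by rw [hg]; ring
    rw [this]; exact neg_neg_of_pos (by positivity)
  have h2 : g (τc + τs) < 0 := by
    have : g (τc + τs) = -(2 * t ^ 2 * τs) := by rw [hg]; ring
    rw [this]; exact neg_neg_of_pos (by positivity)
  have h3 : 0 < g (τc + τs + 2 * t) := by
    have : g (τc + τs + 2 * t)
        = 4 * t * (τc + τs) * (τs + t) + 6 * t ^ 2 * τs + 4 * t ^ 3 := by rw [hg]; ring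
    rw [this]; positivity
  have h4 : g (-τc - τs) < 0 := by
    have e : g (-τc - τs) = -(6 * τc ^ 2 * τs + 4 * τc * τs ^ 2)
        - 2 * (τc ^ 2 - t ^ 2) * (2 * τc + τs) := by rw [hg]; ring
    have p : 0 < 6 * τc ^ 2 * τs + 4 * τc * τs ^ 2 := by positivity
    have q : 0 ≤ τc ^ 2 - t ^ 2 := by nlinarith
    have r : 0 ≤ 2 * (τc ^ 2 - t ^ 2) * (2 * τc + τs) := by positivity
    linarith
  obtain ⟨a, ⟨ha1, ha2⟩, ha⟩ :=
    intermediate_value_Ioo (by linarith : -τc - τs ≤ 0) hc.continuousOn ⟨h4, h0⟩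
  obtain ⟨b, ⟨hb1, hb2⟩, hb⟩ :=
    intermediate_value_Ioo' (by linarith : 0 ≤ τc) hc.continuousOn ⟨h1, h0⟩
  obtain ⟨d, ⟨hd1, hd2⟩, hd⟩ :=
    intermediate_value_Ioo (by linarith : τc + τs ≤ τc + τs + 2 * t) hc.continuousOn ⟨h2, h3⟩
  refine ⟨a, b, d, ha, hb, hd, ha1, ha2, hb1, hb2, hd1, ?_⟩
  have key : ∀ x, g x = 0 → x ≠ a → x ≠ b → a + b + x = 2 * τc := by
    intro x hx hxa hxb
    have hab : a - b ≠ 0 := by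
      intro h; linarith
    have hxa' := sub_ne_zero.mpr hxa
    have hxb' := sub_ne_zero.mpr hxb
    rw [hg] at hx ha hb
    have e : (a - b) * ((x - a) * ((x - b) * (a + b + x - 2 * τc))) = 0 := by
      linear_combination (a - b) * hx + (b - x) * ha + (x - a) * hb
    simp only [mul_eq_zero, hab, hxa', hxb', false_or] at e
    linarith
  intro z hz
  by_cases hza : z = a
  · exact Or.inl hza
  by_cases hzb : z = b
  · exact Or.inr (Or.inl hzb)
  have k1 := key z hz hza hzb
  have k2 := key d hd (by intro h; linarith) (by intro h; linarith)
  exact Or.inr (Or.inr (by linarith))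
end

section
/- Assume t ≠ 0, and let λ ∈ ℝ with λ ≠ 1 + τ_c and λ ≠ 1 be such that z = λ − 1 satisfies g(z) = 0. Set a = (λ − 1)/(2t) and b = τ_s·(λ − 1)/(2·(λ − 1 − τ_c)·t). Then the vector v = (1, a, a, b, b)ᵀ ∈ ℝ⁵ is an eigenvector of T(t) with eigenvalue λ, i.e., T(t)·v = λ·v. -/
open Matrix

/-- If `z = λ − 1` is a root of `g` with `λ ≠ 1 + τ_c`, `λ ≠ 1` and `t ≠ 0`, then
`v = (1, a, a, b, b)ᵀ` with `a = (λ−1)/(2t)`, `b = τ_s(λ−1)/(2(λ−1−τ_c)t)` is an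
eigenvector of `T(t)` with eigenvalue `λ`. -/
theorem eigenvector_of_cubic_root
    (τc τs t : ℝ) (ht : t ≠ 0) (lam : ℝ)
    (hlam1 : lam ≠ 1 + τc) (hlam2 : lam ≠ 1)
    (hroot : (lam - 1) ^ 3 - 2 * τc * (lam - 1) ^ 2
        + (τc ^ 2 - τs ^ 2 - 2 * t ^ 2) * (lam - 1) + 2 * τc * t ^ 2 = 0)
    (a b : ℝ) (ha : a = (lam - 1) / (2 * t))
    (hb : b = τs * (lam - 1) / (2 * (lam - 1 - τc) * t))
    (T : Matrix (Fin 5) (Fin 5) ℝ)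
    (hT : T = !![1, t, t, 0, 0;
                 t, 1, τc, τs, 0;
                 t, τc, 1, 0, τs;
                 0, τs, 0, 1, τc;
                 0, 0, τs, τc, 1]) :
    T *ᵥ ![1, a, a, b, b] = lam • ![1, a, a, b, b] := by
  have hz : lam - 1 - τc ≠ 0 := fun h => hlam1 (by linarith)
  have e1 : 2 * t * a = lam - 1 := by rw [ha]; field_simp
  have e2 : (lam - 1 - τc) * b = τs * a := by rw [ha, hb]; field_simp
  have e3 : t + τs * b = (lam - 1 - τc) * a := by
    have h : 2 * t * (lam - 1 - τc) * (t + τs * b - (lam - 1 - τc) * a) = 0 := by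
      linear_combination 2 * t * τs * e2 + (τs ^ 2 - (lam - 1 - τc) ^ 2) * e1 - hroot
    have h2 : 2 * t * (lam - 1 - τc) ≠ 0 := mul_ne_zero (mul_ne_zero two_ne_zero ht) hz
    linarith [(mul_eq_zero.mp h).resolve_left h2]
  subst hT
  ext i
  fin_cases i <;> simp [Matrix.mulVec, dotProduct, Fin.sum_univ_succ]
  · linarith
  · linarith
  · linarith
  · linarith
  · linarith
end

section
/- Let a, b ∈ ℝ with (a, b) ≠ (0, 0), let U ∈ ℝ^{4×2} be the matrix whose two columns are (a, a, b, b)ᵀ and (−1, 1, −1, 1)ᵀ, and let y = (1, 1, 0, 0)ᵀ. Then R(U, y) = 2b² / (a² + b²). -/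
open Matrix

/-- For `U` with columns `(a,a,b,b)ᵀ` and `(−1,1,−1,1)ᵀ`, `(a,b) ≠ (0,0)`, and
`y = (1,1,0,0)ᵀ`, the regression residual is `R(U,y) = 2b²/(a²+b²)`. -/
theorem residual_toy_general
    (a b : ℝ) (hab : ¬(a = 0 ∧ b = 0))
    (U : Matrix (Fin 4) (Fin 2) ℝ)
    (hU : U = !![a, -1; a, 1; b, -1; b, 1])
    (y : Fin 4 → ℝ) (hy : y = ![1, 1, 0, 0]) :
    sInf {r : ℝ | ∃ μ : Fin 2 → ℝ, r = ∑ i, (y i - (U *ᵥ μ) i) ^ 2}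
      = 2 * b ^ 2 / (a ^ 2 + b ^ 2) := by
  have hs : 0 < a ^ 2 + b ^ 2 := by
    by_contra h
    apply hab
    constructor <;> nlinarith [sq_nonneg a, sq_nonneg b]
  have key : ∀ μ : Fin 2 → ℝ, ∑ i, (y i - (U *ᵥ μ) i) ^ 2
      = 2 * (1 - a * μ 0) ^ 2 + 2 * (b * μ 0) ^ 2 + 4 * (μ 1) ^ 2 := by
    intro μ
    subst hU hy
    simp [Fin.sum_univ_four, Matrix.mulVec, dotProduct, Fin.sum_univ_two]
    ring
  apply IsLeast.csInf_eq
  constructor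
  · refine ⟨![a / (a ^ 2 + b ^ 2), 0], ?_⟩
    rw [key]
    simp only [Matrix.cons_val_zero, Matrix.cons_val_one]
    field_simp
    ring
  · rintro r ⟨μ, rfl⟩
    rw [key, div_le_iff₀ hs]
    nlinarith [sq_nonneg ((a ^ 2 + b ^ 2) * μ 0 - a), mul_nonneg hs.le (sq_nonneg (μ 1))]
end

section
/- Let a₁, b₁, a₂, b₂ ∈ ℝ with a₁·b₂ ≠ a₂·b₁, let U ∈ ℝ^{4×2} be the matrix whose two columns are (a₁, b₁, a₁, b₁)ᵀ and (a₂, b₂, a₂, b₂)ᵀ, and let y = (1, 1, 0, 0)ᵀ. Then R(U, y) = 1. -/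
open Matrix

/-- For `U` with columns `(a₁,b₁,a₁,b₁)ᵀ` and `(a₂,b₂,a₂,b₂)ᵀ` with `a₁b₂ ≠ a₂b₁`,
and `y = (1,1,0,0)ᵀ`, the regression residual is `R(U,y) = 1`. -/
theorem residual_one_of_interleaved_columns
    (a₁ b₁ a₂ b₂ : ℝ) (h : a₁ * b₂ ≠ a₂ * b₁)
    (U : Matrix (Fin 4) (Fin 2) ℝ)
    (hU : U = !![a₁, a₂; b₁, b₂; a₁, a₂; b₁, b₂])
    (y : Fin 4 → ℝ) (hy : y = ![1, 1, 0, 0]) :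
    sInf {r : ℝ | ∃ μ : Fin 2 → ℝ, r = ∑ i, (y i - (U *ᵥ μ) i) ^ 2} = 1 := by
  subst hU hy
  have hD : a₁ * b₂ - a₂ * b₁ ≠ 0 := sub_ne_zero.mpr h
  have key : ∀ μ : Fin 2 → ℝ,
      ∑ i, ((![1, 1, 0, 0] : Fin 4 → ℝ) i
        - (!![a₁, a₂; b₁, b₂; a₁, a₂; b₁, b₂] *ᵥ μ) i) ^ 2
      = (1 - (a₁ * μ 0 + a₂ * μ 1)) ^ 2 + (1 - (b₁ * μ 0 + b₂ * μ 1)) ^ 2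
        + (a₁ * μ 0 + a₂ * μ 1) ^ 2 + (b₁ * μ 0 + b₂ * μ 1) ^ 2 := by
    intro μ
    simp [Fin.sum_univ_four, Matrix.mulVec, dotProduct, Fin.sum_univ_two]
    try ring
  apply IsLeast.csInf_eq
  constructor
  · refine ⟨![(b₂ - a₂) / (2 * (a₁ * b₂ - a₂ * b₁)),
      (a₁ - b₁) / (2 * (a₁ * b₂ - a₂ * b₁))], ?_⟩
    rw [key]
    have h1 : a₁ * ((b₂ - a₂) / (2 * (a₁ * b₂ - a₂ * b₁)))
        + a₂ * ((a₁ - b₁) / (2 * (a₁ * b₂ - a₂ * b₁))) = 1 / 2 := by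
      rw [mul_div_assoc', mul_div_assoc', ← add_div, div_eq_iff (mul_ne_zero two_ne_zero hD)]
      ring
    have h2 : b₁ * ((b₂ - a₂) / (2 * (a₁ * b₂ - a₂ * b₁)))
        + b₂ * ((a₁ - b₁) / (2 * (a₁ * b₂ - a₂ * b₁))) = 1 / 2 := by
      rw [mul_div_assoc', mul_div_assoc', ← add_div, div_eq_iff (mul_ne_zero two_ne_zero hD)]
      ring
    simp only [Matrix.cons_val_zero, Matrix.cons_val_one]
    rw [h1, h2]
    norm_num
  · rintro r ⟨μ, rfl⟩
    rw [key]
    nlinarith [sq_nonneg (2 * (a₁ * μ 0 + a₂ * μ 1) - 1),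
      sq_nonneg (2 * (b₁ * μ 0 + b₂ * μ 1) - 1)]
end
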